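/- arXiv:math-ph/0308010 — 4 statements merged into one kernel-verified Lean document; each statement's English description precedes it below -/
import Mathlib

section
/- The energy-type function H(M,N,S) = (1/2)⟨M, I⁻¹M⟩ − ω_O⟨M,N⟩ + (3/2)ω_K²⟨S, IS⟩ − (ξ/2)⟨L,N⟩² is a first integral of the satellite system: for every differentiable solution t ↦ (M(t),N(t),S(t)) of the system, the function t ↦ H(M(t),N(t),S(t)) is constant. -/
noncomputable section

/-- Cross product on ℝ³. -/
def cross3 (a b : Fin 3 → ℝ) : Fin 3 → ℝ :=
  ![a 1 * b 2 - a 2 * b 1, a 2 * b 0 - a 0 * b 2, a 0 * b 1 - a 1 * b 0]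

/-- Euclidean inner product on ℝ³. -/
def dot3 (a b : Fin 3 → ℝ) : ℝ := a 0 * b 0 + a 1 * b 1 + a 2 * b 2

/-- `I v` where `I = diag(A,B,C)`. -/
def inertia (A B C : ℝ) (v : Fin 3 → ℝ) : Fin 3 → ℝ := ![A * v 0, B * v 1, C * v 2]

/-- `I⁻¹ v` where `I = diag(A,B,C)`. -/
def inertiaInv (A B C : ℝ) (v : Fin 3 → ℝ) : Fin 3 → ℝ := ![v 0 / A, v 1 / B, v 2 / C]

/-- Right-hand side for `M' = M×Ω + 3ω_K² S×(IS) + ξ⟨L,N⟩ L×N`, with `Ω = I⁻¹M`. -/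
def rhsM (A B C ωK ξ : ℝ) (L M N S : Fin 3 → ℝ) : Fin 3 → ℝ :=
  cross3 M (inertiaInv A B C M) + (3 * ωK ^ 2) • cross3 S (inertia A B C S)
    + (ξ * dot3 L N) • cross3 L N

/-- Right-hand side for `N' = N×Ω`. -/
def rhsN (A B C : ℝ) (M N : Fin 3 → ℝ) : Fin 3 → ℝ :=
  cross3 N (inertiaInv A B C M)

/-- Right-hand side for `S' = S×(Ω − ω_O N)`. -/
def rhsS (A B C ωO : ℝ) (M N S : Fin 3 → ℝ) : Fin 3 → ℝ :=
  cross3 S (inertiaInv A B C M - ωO • N)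

/-- `(M,N,S) : ℝ → ℝ³×ℝ³×ℝ³` is a (differentiable) solution of the satellite system. -/
def IsSatelliteSolution (A B C ωO ωK ξ : ℝ) (L : Fin 3 → ℝ)
    (M N S : ℝ → Fin 3 → ℝ) : Prop :=
  ∀ t : ℝ, ∀ i : Fin 3,
    HasDerivAt (fun s => M s i) (rhsM A B C ωK ξ L (M t) (N t) (S t) i) t ∧
    HasDerivAt (fun s => N s i) (rhsN A B C (M t) (N t) i) t ∧
    HasDerivAt (fun s => S s i) (rhsS A B C ωO (M t) (N t) (S t) i) t

/-- The energy-type function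
`H = (1/2)⟨M,I⁻¹M⟩ − ω_O⟨M,N⟩ + (3/2)ω_K²⟨S,IS⟩ − (ξ/2)⟨L,N⟩²`. -/
def energyH (A B C ωO ωK ξ : ℝ) (L M N S : Fin 3 → ℝ) : ℝ :=
  (1 / 2) * dot3 M (inertiaInv A B C M) - ωO * dot3 M N
    + (3 / 2) * ωK ^ 2 * dot3 S (inertia A B C S) - (ξ / 2) * (dot3 L N) ^ 2

/-!
The satellite system is the Lie–Poisson system of `H`: with `(u, v, w)` the gradient of `H` at
`(M, N, S)`, it reads `M' = M × u + N × v + S × w`, `N' = N × u`, `S' = S × u`. Along a solution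
`H' = ⟨u, M'⟩ + ⟨v, N'⟩ + ⟨w, S'⟩`, where `⟨u, M × u⟩ = 0` and the remaining terms cancel in pairs
because the triple product is alternating.
-/

open Matrix

section Gradient

variable {ι : Type*} [Fintype ι]

/-- The dot product on `ℝⁿ` as a continuous bilinear map. The vectors are plain functions, so that
Mathlib's inner product and its gradient `HasGradientAt` are not available. -/
def dotProductL : (ι → ℝ) →L[ℝ] (ι → ℝ) →L[ℝ] ℝ :=
  (dotProductBilin ℝ ℝ).toContinuousBilinearMap

@[simp]
lemma dotProductL_apply (a b : ι → ℝ) : dotProductL a b = a ⬝ᵥ b := rfl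

lemma hasFDerivAt_dotProduct {E : Type*} [NormedAddCommGroup E] [NormedSpace ℝ E]
    {f g : E → ι → ℝ} {f' g' : E →L[ℝ] ι → ℝ} {x : E}
    (hf : HasFDerivAt f f' x) (hg : HasFDerivAt g g' x) :
    HasFDerivAt (fun y => f y ⬝ᵥ g y) (dotProductL (f x) ∘L g' + dotProductL (g x) ∘L f') x := by
  refine (dotProductL.hasFDerivAt_of_bilinear hf hg).congr_fderiv ?_
  ext y
  simp [dotProduct_comm]

lemma hasFDerivAt_dotProduct_mulVec_self {K : Matrix ι ι ℝ} (hK : K.IsSymm) (x : ι → ℝ) :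
    HasFDerivAt (fun y => y ⬝ᵥ K *ᵥ y) ((2 : ℝ) • dotProductL (K *ᵥ x)) x := by
  have hKx : HasFDerivAt (fun y => K *ᵥ y) (LinearMap.toContinuousLinearMap K.mulVecLin) x :=
    (LinearMap.toContinuousLinearMap K.mulVecLin).hasFDerivAt
  refine (hasFDerivAt_dotProduct (hasFDerivAt_id x) hKx).congr_fderiv ?_
  ext y
  have hsymm : x ⬝ᵥ K *ᵥ y = K *ᵥ x ⬝ᵥ y := by
    rw [dotProduct_mulVec, ← mulVec_transpose, hK.eq]
  simp [hsymm, two_mul]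

end Gradient

section LiePoisson

/-- The phase space of the triples `(M, N, S)`: the angular momentum of a rigid body and two further
vectors, all three expressed in the body frame. -/
abbrev PhaseSpace := (Fin 3 → ℝ) × (Fin 3 → ℝ) × (Fin 3 → ℝ)

/-- `G` is the gradient field of `H` on the phase space, for the sum of the three dot products. -/
def IsGradientField (H : PhaseSpace → ℝ) (G : PhaseSpace → PhaseSpace) : Prop :=
  ∀ p, HasFDerivAt H
    ((dotProductL (G p).1).coprod ((dotProductL (G p).2.1).coprod (dotProductL (G p).2.2))) p

/-- The Lie–Poisson vector field on the dual of `so(3) ⋉ (ℝ³ × ℝ³)` of a Hamiltonian with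
gradient field `G`. -/
def liePoissonField (G : PhaseSpace → PhaseSpace) (p : PhaseSpace) : PhaseSpace :=
  (p.1 ⨯₃ (G p).1 + p.2.1 ⨯₃ (G p).2.1 + p.2.2 ⨯₃ (G p).2.2, p.2.1 ⨯₃ (G p).1, p.2.2 ⨯₃ (G p).1)

lemma dotProduct_crossProduct_add_swap {R : Type*} [CommRing R] (u v w : Fin 3 → R) :
    u ⬝ᵥ v ⨯₃ w + w ⬝ᵥ v ⨯₃ u = 0 := by
  rw [triple_product_permutation u v w, triple_product_permutation v w u, ← dotProduct_add,
    cross_anticomm', dotProduct_zero]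

lemma IsGradientField.hasDerivAt_comp {H : PhaseSpace → ℝ} {G : PhaseSpace → PhaseSpace}
    (hG : IsGradientField H G) {γ : ℝ → PhaseSpace} {v : PhaseSpace} {t : ℝ}
    (hγ : HasDerivAt γ v t) :
    HasDerivAt (fun s => H (γ s))
      ((G (γ t)).1 ⬝ᵥ v.1 + ((G (γ t)).2.1 ⬝ᵥ v.2.1 + (G (γ t)).2.2 ⬝ᵥ v.2.2)) t :=
  (hG (γ t)).comp_hasDerivAt t hγ

lemma dotProduct_liePoissonField_eq_zero (G : PhaseSpace → PhaseSpace) (p : PhaseSpace) :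
    (G p).1 ⬝ᵥ (liePoissonField G p).1 + ((G p).2.1 ⬝ᵥ (liePoissonField G p).2.1 +
      (G p).2.2 ⬝ᵥ (liePoissonField G p).2.2) = 0 := by
  have hM := dot_cross_self p.1 (G p).1
  have hN := dotProduct_crossProduct_add_swap (G p).1 p.2.1 (G p).2.1
  have hS := dotProduct_crossProduct_add_swap (G p).1 p.2.2 (G p).2.2
  simp only [liePoissonField, dotProduct_add]
  linear_combination hM + hN + hS

theorem energy_first_integral_general {H : PhaseSpace → ℝ} {G : PhaseSpace → PhaseSpace}
    (hG : IsGradientField H G) {γ : ℝ → PhaseSpace}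
    (hγ : IsIntegralCurve γ fun _ => liePoissonField G) (t₁ t₂ : ℝ) :
    H (γ t₁) = H (γ t₂) := by
  have hderiv (t : ℝ) : HasDerivAt (fun s => H (γ s)) 0 t :=
    (hG.hasDerivAt_comp (hγ t)).congr_deriv (dotProduct_liePoissonField_eq_zero G (γ t))
  exact is_const_of_deriv_eq_zero (fun t => (hderiv t).differentiableAt)
    (fun t => (hderiv t).deriv) t₁ t₂

end LiePoisson

section Satellite

variable (A B C ωO ωK ξ : ℝ) (L : Fin 3 → ℝ)

lemma cross3_eq_crossProduct (a b : Fin 3 → ℝ) : cross3 a b = a ⨯₃ b := rfl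

lemma dot3_eq_dotProduct (a b : Fin 3 → ℝ) : dot3 a b = a ⬝ᵥ b := (vec3_dotProduct a b).symm

lemma inertia_eq_mulVec (v : Fin 3 → ℝ) : inertia A B C v = diagonal ![A, B, C] *ᵥ v := by
  ext i
  fin_cases i <;> simp [inertia, mulVec_diagonal]

lemma inertiaInv_eq_inertia (v : Fin 3 → ℝ) : inertiaInv A B C v = inertia A⁻¹ B⁻¹ C⁻¹ v := by
  simp only [inertiaInv, inertia, div_eq_inv_mul]

lemma hasFDerivAt_dotProduct_inertia_self (x : Fin 3 → ℝ) :
    HasFDerivAt (fun y => y ⬝ᵥ inertia A B C y) ((2 : ℝ) • dotProductL (inertia A B C x)) x := by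
  simpa only [inertia_eq_mulVec] using
    hasFDerivAt_dotProduct_mulVec_self (isSymm_diagonal ![A, B, C]) x

lemma hasFDerivAt_dotProduct_inertiaInv_self (x : Fin 3 → ℝ) :
    HasFDerivAt (fun y => y ⬝ᵥ inertiaInv A B C y)
      ((2 : ℝ) • dotProductL (inertiaInv A B C x)) x := by
  simpa only [inertiaInv_eq_inertia] using hasFDerivAt_dotProduct_inertia_self A⁻¹ B⁻¹ C⁻¹ x

/-- The gradient of `energyH` with respect to `(M, N, S)`; its first component is the angular
velocity `Ω - ω_O N` relative to the orbital frame. -/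
def energyGradient (p : PhaseSpace) : PhaseSpace :=
  (inertiaInv A B C p.1 - ωO • p.2.1, -(ωO • p.1) - (ξ * L ⬝ᵥ p.2.1) • L,
    (3 * ωK ^ 2) • inertia A B C p.2.2)

lemma isGradientField_energyGradient :
    IsGradientField (fun p => energyH A B C ωO ωK ξ L p.1 p.2.1 p.2.2)
      (energyGradient A B C ωO ωK ξ L) := by
  intro p
  have hM : HasFDerivAt (fun q : PhaseSpace => q.1) _ p := hasFDerivAt_fst (𝕜 := ℝ)
  have hN : HasFDerivAt (fun q : PhaseSpace => q.2.1) _ p := (hasFDerivAt_snd (𝕜 := ℝ)).fst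
  have hS : HasFDerivAt (fun q : PhaseSpace => q.2.2) _ p := (hasFDerivAt_snd (𝕜 := ℝ)).snd
  have hMΩ := (hasFDerivAt_dotProduct_inertiaInv_self A B C p.1).comp p hM
  have hMN := hasFDerivAt_dotProduct hM hN
  have hSIS := (hasFDerivAt_dotProduct_inertia_self A B C p.2.2).comp p hS
  have hLN := hasFDerivAt_dotProduct (hasFDerivAt_const L p) hN
  simp only [energyH, dot3_eq_dotProduct]
  refine ((((hMΩ.const_mul (1 / 2)).sub (hMN.const_mul ωO)).add
    (hSIS.const_mul (3 / 2 * ωK ^ 2))).sub ((hLN.pow 2).const_mul (ξ / 2))).congr_fderiv ?_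
  ext q <;> simp [energyGradient] <;> ring

variable {A B C ωO ωK ξ L}

lemma liePoissonField_energyGradient (M N S : Fin 3 → ℝ) :
    liePoissonField (energyGradient A B C ωO ωK ξ L) (M, N, S) =
      (rhsM A B C ωK ξ L M N S, rhsN A B C M N, rhsS A B C ωO M N S) := by
  have hM : M ⨯₃ (inertiaInv A B C M - ωO • N) + N ⨯₃ (-(ωO • M) - (ξ * L ⬝ᵥ N) • L) +
      S ⨯₃ ((3 * ωK ^ 2) • inertia A B C S) = rhsM A B C ωK ξ L M N S := by
    simp only [rhsM, cross3_eq_crossProduct, dot3_eq_dotProduct, map_sub, map_neg, map_smul,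
      ← cross_anticomm N M, ← cross_anticomm N L]
    module
  have hN : N ⨯₃ (inertiaInv A B C M - ωO • N) = rhsN A B C M N := by
    simp [rhsN, cross3_eq_crossProduct]
  simp only [liePoissonField, energyGradient, hM, hN, rhsS, cross3_eq_crossProduct]

lemma IsSatelliteSolution.isIntegralCurve {M N S : ℝ → Fin 3 → ℝ}
    (hsol : IsSatelliteSolution A B C ωO ωK ξ L M N S) :
    IsIntegralCurve (fun t => (M t, N t, S t))
      fun _ => liePoissonField (energyGradient A B C ωO ωK ξ L) := by
  intro t
  have hM := hasDerivAt_pi.2 fun i => (hsol t i).1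
  have hN := hasDerivAt_pi.2 fun i => (hsol t i).2.1
  have hS := hasDerivAt_pi.2 fun i => (hsol t i).2.2
  simpa only [liePoissonField_energyGradient] using hM.prodMk (hN.prodMk hS)

end Satellite

/-- `H` is a first integral of the satellite system. -/
theorem energy_first_integral (A B C ωO ωK ξ : ℝ)
    (hA : 0 < A) (hB : 0 < B) (hC : 0 < C) (L : Fin 3 → ℝ)
    (M N S : ℝ → Fin 3 → ℝ)
    (hsol : IsSatelliteSolution A B C ωO ωK ξ L M N S) :
    ∀ t₁ t₂ : ℝ,
      energyH A B C ωO ωK ξ L (M t₁) (N t₁) (S t₁)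
        = energyH A B C ωO ωK ξ L (M t₂) (N t₂) (S t₂) :=
  energy_first_integral_general (isGradientField_energyGradient A B C ωO ωK ξ L)
    hsol.isIntegralCurve
end
end

section
/- For an axially symmetric satellite with A = B and magnetic axis L = (0,0,1), the third component M₃ of the angular momentum is a first integral of the satellite system: along every differentiable solution t ↦ (M(t),N(t),S(t)), the function t ↦ M₃(t) is constant. -/
noncomputable section

/-!
Each of the three torques has zero component along the symmetry axis. For `A = B` the tensors `I`
and `I⁻¹` act as scalars on the equatorial plane, so the equatorial parts of `M` and `Ω`, and those
of `S` and `IS`, are parallel; the magnetic torque is orthogonal to `L`, which lies on the axis.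
Hence `M₃' = 0`.
-/

theorem cross3_inertiaInv_apply_two (A C : ℝ) (v : Fin 3 → ℝ) :
    cross3 v (inertiaInv A A C v) 2 = 0 :=
  show v 0 * (v 1 / A) - v 1 * (v 0 / A) = 0 by ring

theorem cross3_inertia_apply_two (A C : ℝ) (v : Fin 3 → ℝ) :
    cross3 v (inertia A A C v) 2 = 0 :=
  show v 0 * (A * v 1) - v 1 * (A * v 0) = 0 by ring

theorem cross3_apply_two_of_left_axial {a : Fin 3 → ℝ} (h₀ : a 0 = 0) (h₁ : a 1 = 0)
    (b : Fin 3 → ℝ) : cross3 a b 2 = 0 :=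
  show a 0 * b 1 - a 1 * b 0 = 0 by simp [h₀, h₁]

theorem rhsM_apply_two_eq_zero (A C ωK ξ : ℝ) {L : Fin 3 → ℝ} (hL₀ : L 0 = 0) (hL₁ : L 1 = 0)
    (M N S : Fin 3 → ℝ) : rhsM A A C ωK ξ L M N S 2 = 0 := by
  simp only [rhsM, Pi.add_apply, Pi.smul_apply, cross3_inertiaInv_apply_two,
    cross3_inertia_apply_two, cross3_apply_two_of_left_axial hL₀ hL₁, smul_zero, add_zero]

theorem M3_first_integral_general (A C ωK ξ : ℝ) (hA : A ≠ 0)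
    {L : Fin 3 → ℝ} (hL₀ : L 0 = 0) (hL₁ : L 1 = 0) (M N S : ℝ → Fin 3 → ℝ)
    (hM : ∀ t, HasDerivAt (fun s => M s 2) (rhsM A A C ωK ξ L (M t) (N t) (S t) 2) t)
    (t₁ t₂ : ℝ) : M t₁ 2 = M t₂ 2 := by
  have hderiv : ∀ t, HasDerivAt (fun s => M s 2) 0 t := fun t => by
    simpa only [rhsM_apply_two_eq_zero A C ωK ξ hL₀ hL₁] using hM t
  exact is_const_of_deriv_eq_zero (fun t => (hderiv t).differentiableAt)
    (fun t => (hderiv t).deriv) t₁ t₂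

/-- for an axially symmetric satellite (`A = B`) with magnetic axis
`L = (0,0,1)`, the third component `M₃` of the angular momentum is a first integral. -/
theorem M3_first_integral (A B C ωO ωK ξ : ℝ)
    (hA : 0 < A) (hB : 0 < B) (hC : 0 < C) (hAB : A = B)
    (M N S : ℝ → Fin 3 → ℝ)
    (hsol : IsSatelliteSolution A B C ωO ωK ξ ![0, 0, 1] M N S) :
    ∀ t₁ t₂ : ℝ, M t₁ 2 = M t₂ 2 := by
  subst hAB
  exact M3_first_integral_general A C ωK ξ hA.ne' rfl rfl M N S fun t => (hsol t 2).1
end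
end

section
/- Suppose W is holomorphic on a neighborhood of 0 in ℂ with W(0) = 0, W'(0) = 1, and W satisfies W''(ζ) + (2/ζ)W'(ζ) − ζ⁻⁴ r(1/ζ) W(ζ) = 0 for all ζ ≠ 0 in that neighborhood, where r is the case C < 1 normal-form coefficient. Then, writing W(ζ) = ζ(1 + f₁ζ + f₂ζ² + f₃ζ³ + O(ζ⁴)), the Taylor coefficients are f₁ = 1/(2ω), f₂ = (ω²(4k²−1) + 2(2−ξ))/(20ω²), f₃ = (ω²(108k²−47) + 2(9−7ξ))/(360ω³), and consequently g₃ := −2(2f₁³ − 3f₁f₂ + f₃) = (ω² − 2ξ)/(9ω³); in particular g₃ ≠ 0 if and only if ω² ≠ 2ξ. -/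
noncomputable section

open Complex

/-- The complementary modulus `k' = √(1−k²)`. -/
def kp (k : ℝ) : ℝ := Real.sqrt (1 - k ^ 2)

/-- The coefficient `p(z) = z(−1 + 2(k²−z²)) / ((k²−z²)(z²+k'²))`. -/
def pcoef (k : ℝ) (z : ℂ) : ℂ :=
  z * (-1 + 2 * ((k : ℂ) ^ 2 - z ^ 2)) /
    (((k : ℂ) ^ 2 - z ^ 2) * (z ^ 2 + (kp k : ℂ) ^ 2))

/-- The coefficient `q(z)` in the case `C < 1`. -/
def qLt (k ω ξ : ℝ) (z : ℂ) : ℂ :=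
  (-(ξ : ℂ) + (1 + (ω : ℂ) * z) ^ 2 + (ω : ℂ) ^ 2 * (z ^ 2 + (kp k : ℂ) ^ 2)) /
    ((ω : ℂ) ^ 2 * ((k : ℂ) ^ 2 - z ^ 2) * (z ^ 2 + (kp k : ℂ) ^ 2))

/-- The normal-form coefficient `r = −q + p'/2 + p²/4` in the case `C < 1`. -/
def rLt (k ω ξ : ℝ) (z : ℂ) : ℂ :=
  -qLt k ω ξ z + deriv (pcoef k) z / 2 + pcoef k z ^ 2 / 4

/-!
In the variable `ζ = 1/z` one has `p(1/ζ) = ζ P(ζ)`, `q(1/ζ) = ζ² Q(ζ)` and `r(1/ζ) = ζ² R(ζ)` with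
`P`, `Q`, `R` analytic at `0`, so the equation becomes `ζ²W'' + 2ζW' = RW`, with a regular singular
point at `0`. Comparing Taylor coefficients gives Frobenius' recurrence
`n(n + 1)wₙ = ∑ ρᵢwₙ₋ᵢ`; as `ρ₀ = 2`, the exponent `1` is a root of the indicial equation and
`w₂, w₃, w₄` are determined by `ρ₁, ρ₂, ρ₃`. These are read off from
`1/((1 - k²ζ²)(1 + k'²ζ²)) = 1 + (k² - k'²)ζ² + O(ζ⁴)`.
-/

open PowerSeries Filter Topology

/-- The formal power series `φ` is the Taylor series at `0` of the function `f`, which is analytic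
there; coefficients are compared with derivatives in division-free form. -/
def HasTaylorSeries {𝕜 : Type*} [NontriviallyNormedField 𝕜] (f : 𝕜 → 𝕜) (φ : 𝕜⟦X⟧) : Prop :=
  AnalyticAt 𝕜 f 0 ∧ ∀ n, iteratedDeriv n f 0 = n.factorial * coeff n φ

section TaylorSeries

variable {𝕜 : Type*} [NontriviallyNormedField 𝕜] {f g : 𝕜 → 𝕜} {φ ψ : 𝕜⟦X⟧}

namespace HasTaylorSeries

lemma coeff_zero (hf : HasTaylorSeries f φ) : coeff 0 φ = f 0 := by
  simpa using (hf.2 0).symm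

lemma const (c : 𝕜) : HasTaylorSeries (fun _ => c) (C c) :=
  ⟨analyticAt_const, fun n => by
    rcases eq_or_ne n 0 with rfl | hn
    · simp
    · simp [iteratedDeriv_const, coeff_C, hn]⟩

protected lemma id : HasTaylorSeries (fun z : 𝕜 => z) X :=
  ⟨analyticAt_id, fun n => by
    rcases eq_or_ne n 1 with rfl | hn
    · simp
    · simp [iteratedDeriv_fun_id_zero, coeff_X, hn]⟩

lemma congr (hf : HasTaylorSeries f φ) (hfg : f =ᶠ[𝓝 0] g) : HasTaylorSeries g φ :=
  ⟨hf.1.congr hfg, fun n => (hfg.iteratedDeriv_eq n).symm.trans (hf.2 n)⟩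

lemma unique [CharZero 𝕜] (hφ : HasTaylorSeries f φ) (hψ : HasTaylorSeries f ψ) : φ = ψ := by
  ext n
  have hn : (n.factorial : 𝕜) ≠ 0 := Nat.cast_ne_zero.mpr n.factorial_ne_zero
  exact mul_left_cancel₀ hn ((hφ.2 n).symm.trans (hψ.2 n))

variable [CompleteSpace 𝕜]

protected lemma add (hf : HasTaylorSeries f φ) (hg : HasTaylorSeries g ψ) :
    HasTaylorSeries (fun z => f z + g z) (φ + ψ) :=
  ⟨hf.1.add hg.1, fun n => by
    rw [iteratedDeriv_fun_add hf.1.contDiffAt hg.1.contDiffAt, hf.2, hg.2, map_add, mul_add]⟩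

protected lemma sub (hf : HasTaylorSeries f φ) (hg : HasTaylorSeries g ψ) :
    HasTaylorSeries (fun z => f z - g z) (φ - ψ) :=
  ⟨hf.1.sub hg.1, fun n => by
    rw [iteratedDeriv_fun_sub hf.1.contDiffAt hg.1.contDiffAt, hf.2, hg.2, map_sub, mul_sub]⟩

protected lemma mul (hf : HasTaylorSeries f φ) (hg : HasTaylorSeries g ψ) :
    HasTaylorSeries (fun z => f z * g z) (φ * ψ) := by
  refine ⟨hf.1.mul hg.1, fun n => ?_⟩
  rw [iteratedDeriv_fun_mul hf.1.contDiffAt hg.1.contDiffAt, coeff_mul,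
    Finset.Nat.sum_antidiagonal_eq_sum_range_succ fun i j => coeff i φ * coeff j ψ, Finset.mul_sum]
  refine Finset.sum_congr rfl fun i hi => ?_
  have hchoose : (n.choose i * i.factorial * (n - i).factorial : 𝕜) = n.factorial := by
    exact_mod_cast congrArg (Nat.cast (R := 𝕜))
      (Nat.choose_mul_factorial_mul_factorial (Finset.mem_range_succ_iff.mp hi))
  rw [hf.2, hg.2, ← hchoose]
  ring

lemma const_mul (c : 𝕜) (hf : HasTaylorSeries f φ) :
    HasTaylorSeries (fun z => c * f z) (C c * φ) :=
  (const c).mul hf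

protected lemma pow (hf : HasTaylorSeries f φ) : ∀ m : ℕ, HasTaylorSeries (fun z => f z ^ m) (φ ^ m)
  | 0 => by simpa using const (1 : 𝕜)
  | m + 1 => by simpa only [pow_succ] using (hf.pow m).mul hf

protected lemma deriv (hf : HasTaylorSeries f φ) : HasTaylorSeries (deriv f) (d⁄dX 𝕜 φ) :=
  ⟨hf.1.deriv, fun n => by
    rw [← iteratedDeriv_succ', hf.2, coeff_derivative, Nat.factorial_succ]
    push_cast
    ring⟩

end HasTaylorSeries

lemma exists_hasTaylorSeries [CharZero 𝕜] (hf : AnalyticAt 𝕜 f 0) : ∃ φ, HasTaylorSeries f φ :=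
  ⟨PowerSeries.mk fun n => iteratedDeriv n f 0 / n.factorial, hf, fun n => by
    rw [coeff_mk, mul_div_cancel₀ _ (Nat.cast_ne_zero.mpr n.factorial_ne_zero)]⟩

lemma HasTaylorSeries.inv [CharZero 𝕜] [CompleteSpace 𝕜] (hf : HasTaylorSeries f φ)
    (h0 : f 0 ≠ 0) : HasTaylorSeries (fun z => (f z)⁻¹) φ⁻¹ := by
  obtain ⟨ψ, hψ⟩ := exists_hasTaylorSeries (hf.1.inv h0)
  have hone : (fun z => (f z)⁻¹ * f z) =ᶠ[𝓝 0] fun _ => 1 := by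
    filter_upwards [hf.1.continuousAt.eventually_ne h0] with z hz using inv_mul_cancel₀ hz
  have hψφ : ψ * φ = 1 := ((hψ.mul hf).congr hone).unique (by simpa using .const (1 : 𝕜))
  have hφ0 : constantCoeff φ ≠ 0 := by
    rwa [← coeff_zero_eq_constantCoeff_apply, hf.coeff_zero]
  rwa [← (eq_inv_iff_mul_eq_one hφ0).mpr hψφ]

theorem frobenius_recurrence [CharZero 𝕜] [CompleteSpace 𝕜] {W R : 𝕜 → 𝕜} {w ρ : 𝕜⟦X⟧} {a : 𝕜}
    (hW : HasTaylorSeries W w) (hR : HasTaylorSeries R ρ)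
    (hode : ∀ᶠ z in 𝓝[≠] (0 : 𝕜),
      z * (z * deriv (deriv W) z) + a * (z * deriv W z) = R z * W z) (n : ℕ) :
    n * (n - 1 + a) * coeff n w = coeff n (ρ * w) := by
  have hlhs := (HasTaylorSeries.id.mul (HasTaylorSeries.id.mul hW.deriv.deriv)).add
    ((HasTaylorSeries.id.mul hW.deriv).const_mul a)
  have hrhs := hR.mul hW
  have hode' := (hlhs.1.continuousAt.eventuallyEq_nhds_iff_eventuallyEq_nhdsNE
    hrhs.1.continuousAt).mp hode
  rw [← (hlhs.congr hode').unique hrhs]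
  rcases n with _ | _ | n
  · simp
  · simp [coeff_derivative, coeff_succ_X_mul]
  · simp only [map_add, coeff_C_mul, coeff_succ_X_mul, coeff_derivative]
    push_cast
    ring

end TaylorSeries

lemma coeff_of_frobenius_recurrence {A : Type*} [CommRing A] {w ρ : A⟦X⟧}
    (hrec : ∀ n : ℕ, n * (n - 1 + 2) * coeff n w = coeff n (ρ * w))
    (hw0 : coeff 0 w = 0) (hw1 : coeff 1 w = 1) (hρ0 : coeff 0 ρ = 2) :
    4 * coeff 2 w = coeff 1 ρ ∧
    10 * coeff 3 w = coeff 1 ρ * coeff 2 w + coeff 2 ρ ∧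
    18 * coeff 4 w = coeff 1 ρ * coeff 3 w + coeff 2 ρ * coeff 2 w + coeff 3 ρ := by
  have h2 := hrec 2
  have h3 := hrec 3
  have h4 := hrec 4
  simp only [coeff_mul, Finset.Nat.sum_antidiagonal_eq_sum_range_succ_mk, Finset.sum_range_succ,
    Finset.sum_range_zero, Nat.reduceSub, hw0, hw1, hρ0] at h2 h3 h4
  push_cast at h2 h3 h4
  exact ⟨by linear_combination h2, by linear_combination h3, by linear_combination h4⟩

/-- The polynomial `(1 - k²ζ²)(1 + k'²ζ²)`, which is `-ζ⁴` times the common denominator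
`(k² - z²)(z² + k'²)` of `p` and `q` at `z = 1/ζ`. -/
def denomAtInfinity (k : ℝ) (ζ : ℂ) : ℂ :=
  (1 - (k : ℂ) ^ 2 * ζ ^ 2) * (1 + (kp k : ℂ) ^ 2 * ζ ^ 2)

/-- The function `p(1/ζ)/ζ`, continued analytically to `ζ = 0`. -/
def pAtInfinity (k : ℝ) (ζ : ℂ) : ℂ :=
  (2 - (2 * (k : ℂ) ^ 2 - 1) * ζ ^ 2) * (denomAtInfinity k ζ)⁻¹

/-- The function `-q(1/ζ)/ζ²`, continued analytically to `ζ = 0`. -/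
def negQAtInfinity (k ω ξ : ℝ) (ζ : ℂ) : ℂ :=
  (2 + 2 / ω * ζ + ((1 - ξ) / ω ^ 2 + (kp k : ℂ) ^ 2) * ζ ^ 2) * (denomAtInfinity k ζ)⁻¹

/-- The function `r(1/ζ)/ζ²`, continued analytically to `ζ = 0`. The minus sign in front of the
derivative comes from `dz = -ζ⁻² dζ`. -/
def rAtInfinity (k ω ξ : ℝ) (ζ : ℂ) : ℂ :=
  negQAtInfinity k ω ξ ζ - 1 / 2 * deriv (fun x => x * pAtInfinity k x) ζ
    + 1 / 4 * pAtInfinity k ζ ^ 2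

section InversionToInfinity

variable {k ω ξ : ℝ} {ζ : ℂ}

lemma denom_inv_eq_denomAtInfinity (hζ : ζ ≠ 0) :
    ((k : ℂ) ^ 2 - ζ⁻¹ ^ 2) * (ζ⁻¹ ^ 2 + (kp k : ℂ) ^ 2) = -(denomAtInfinity k ζ / ζ ^ 4) := by
  rw [denomAtInfinity]
  field_simp
  ring

lemma pcoef_inv (k : ℝ) (ζ : ℂ) : pcoef k ζ⁻¹ = ζ * pAtInfinity k ζ := by
  rcases eq_or_ne ζ 0 with rfl | hζ
  · simp [pcoef]
  rw [pcoef, pAtInfinity, denom_inv_eq_denomAtInfinity hζ]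
  generalize denomAtInfinity k ζ = Δ
  field_simp
  ring

lemma qLt_inv (hω : ω ≠ 0) (hζ : ζ ≠ 0) : qLt k ω ξ ζ⁻¹ = -(ζ ^ 2 * negQAtInfinity k ω ξ ζ) := by
  have hω' : (ω : ℂ) ≠ 0 := ofReal_ne_zero.mpr hω
  rw [qLt, negQAtInfinity, mul_assoc _ (_ - _), denom_inv_eq_denomAtInfinity hζ]
  generalize denomAtInfinity k ζ = Δ
  field_simp
  ring

lemma deriv_pcoef_inv (hζ : ζ ≠ 0) (hp : DifferentiableAt ℂ (pAtInfinity k) ζ) :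
    deriv (pcoef k) ζ⁻¹ = -(ζ ^ 2 * deriv (fun x => x * pAtInfinity k x) ζ) := by
  have hcomp : pcoef k = (fun x => x * pAtInfinity k x) ∘ Inv.inv := by
    ext z
    simp only [Function.comp_apply, ← pcoef_inv, inv_inv]
  have hmul : DifferentiableAt ℂ (fun x => x * pAtInfinity k x) ζ⁻¹⁻¹ := by
    rw [inv_inv]
    exact differentiableAt_id.mul hp
  rw [hcomp, deriv_comp _ hmul (differentiableAt_inv (inv_ne_zero hζ)), deriv_inv, inv_inv]
  field_simp

lemma rLt_inv (hω : ω ≠ 0) (hζ : ζ ≠ 0) (hp : DifferentiableAt ℂ (pAtInfinity k) ζ) :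
    rLt k ω ξ ζ⁻¹ = ζ ^ 2 * rAtInfinity k ω ξ ζ := by
  rw [rLt, rAtInfinity, qLt_inv hω hζ, pcoef_inv, deriv_pcoef_inv hζ hp]
  ring

end InversionToInfinity

section ExpansionAtInfinity

variable {k : ℝ}

lemma kp_sq (hk : k ^ 2 ≤ 1) : (kp k : ℂ) ^ 2 = 1 - (k : ℂ) ^ 2 := by
  exact_mod_cast Real.sq_sqrt (sub_nonneg.mpr hk)

lemma coeff_of_one_sub_mul_one_add_mul_eq_one {A : Type*} [CommRing A] {a b : A} {φ : A⟦X⟧}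
    (h : (1 - C a * X ^ 2) * (1 + C b * X ^ 2) * φ = 1) :
    coeff 0 φ = 1 ∧ coeff 1 φ = 0 ∧ coeff 2 φ = a - b ∧ coeff 3 φ = 0 := by
  have hφ : φ = 1 + C (a - b) * (X ^ 2 * φ) + C (a * b) * (X ^ 4 * φ) := by
    rw [map_sub, map_mul]
    linear_combination h
  have hrec (n : ℕ) : coeff n φ = (if n = 0 then 1 else 0) +
      (a - b) * (if 2 ≤ n then coeff (n - 2) φ else 0) +
      a * b * (if 4 ≤ n then coeff (n - 4) φ else 0) := by
    conv_lhs => rw [hφ]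
    simp only [map_add, coeff_C_mul, coeff_X_pow_mul', coeff_one]
  have h0 : coeff 0 φ = 1 := by simpa using hrec 0
  have h1 : coeff 1 φ = 0 := by simpa using hrec 1
  exact ⟨h0, h1, by simpa [h0] using hrec 2, by simpa [h1] using hrec 3⟩

lemma hasTaylorSeries_denomAtInfinity (k : ℝ) : HasTaylorSeries (denomAtInfinity k)
    ((1 - C ((k : ℂ) ^ 2) * X ^ 2) * (1 + C ((kp k : ℂ) ^ 2) * X ^ 2)) := by
  have hsq := HasTaylorSeries.id (𝕜 := ℂ).pow 2
  rw [← map_one C]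
  exact ((HasTaylorSeries.const 1).sub (hsq.const_mul _)).mul
    ((HasTaylorSeries.const 1).add (hsq.const_mul _))

lemma analyticAt_pAtInfinity (k : ℝ) : AnalyticAt ℂ (pAtInfinity k) 0 :=
  (by fun_prop : AnalyticAt ℂ (fun ζ : ℂ => 2 - (2 * (k : ℂ) ^ 2 - 1) * ζ ^ 2) 0).mul
    ((hasTaylorSeries_denomAtInfinity k).1.inv (by simp [denomAtInfinity]))

lemma exists_hasTaylorSeries_inv_denomAtInfinity (hk : k ^ 2 ≤ 1) :
    ∃ φ, HasTaylorSeries (fun ζ => (denomAtInfinity k ζ)⁻¹) φ ∧ coeff 0 φ = 1 ∧ coeff 1 φ = 0 ∧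
      coeff 2 φ = 2 * (k : ℂ) ^ 2 - 1 ∧ coeff 3 φ = 0 := by
  refine ⟨_, (hasTaylorSeries_denomAtInfinity k).inv (by simp [denomAtInfinity]), ?_⟩
  have hmul := PowerSeries.mul_inv_cancel
    ((1 - C ((k : ℂ) ^ 2) * X ^ 2) * (1 + C ((kp k : ℂ) ^ 2) * X ^ 2)) (by simp)
  obtain ⟨h0, h1, h2, h3⟩ := coeff_of_one_sub_mul_one_add_mul_eq_one hmul
  refine ⟨h0, h1, ?_, h3⟩
  rw [h2, kp_sq hk]
  ring

lemma exists_hasTaylorSeries_pAtInfinity (hk : k ^ 2 ≤ 1) :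
    ∃ φ, HasTaylorSeries (pAtInfinity k) φ ∧ coeff 0 φ = 2 ∧ coeff 1 φ = 0 ∧
      coeff 2 φ = 2 * (k : ℂ) ^ 2 - 1 ∧ coeff 3 φ = 0 := by
  obtain ⟨φ, hφ, h0, h1, h2, h3⟩ := exists_hasTaylorSeries_inv_denomAtInfinity hk
  refine ⟨_, ((HasTaylorSeries.const 2).sub ((HasTaylorSeries.id.pow 2).const_mul _)).mul hφ, ?_⟩
  simp only [sub_mul, mul_assoc, map_sub, coeff_C_mul, coeff_X_pow_mul', h0, h1, h2, h3]
  norm_num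
  ring

lemma exists_hasTaylorSeries_negQAtInfinity (hk : k ^ 2 ≤ 1) (ω ξ : ℝ) :
    ∃ φ, HasTaylorSeries (negQAtInfinity k ω ξ) φ ∧ coeff 0 φ = 2 ∧ coeff 1 φ = 2 / (ω : ℂ) ∧
      coeff 2 φ = (1 - ξ) / (ω : ℂ) ^ 2 + 3 * (k : ℂ) ^ 2 - 1 ∧
      coeff 3 φ = 2 * (2 * (k : ℂ) ^ 2 - 1) / ω := by
  obtain ⟨φ, hφ, h0, h1, h2, h3⟩ := exists_hasTaylorSeries_inv_denomAtInfinity hk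
  refine ⟨_, (((HasTaylorSeries.const 2).add (HasTaylorSeries.id.const_mul _)).add
    ((HasTaylorSeries.id.pow 2).const_mul _)).mul hφ, ?_⟩
  simp only [add_mul, mul_assoc, map_add, coeff_C_mul, coeff_X_pow_mul', coeff_zero_X_mul,
    coeff_succ_X_mul, h0, h1, h2, h3, kp_sq hk]
  norm_num
  constructor <;> ring

lemma exists_hasTaylorSeries_rAtInfinity (hk : k ^ 2 ≤ 1) (ω ξ : ℝ) :
    ∃ φ, HasTaylorSeries (rAtInfinity k ω ξ) φ ∧ coeff 0 φ = 2 ∧ coeff 1 φ = 2 / (ω : ℂ) ∧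
      coeff 2 φ = (1 - ξ) / (ω : ℂ) ^ 2 + 2 * (k : ℂ) ^ 2 - 1 / 2 ∧
      coeff 3 φ = 2 * (2 * (k : ℂ) ^ 2 - 1) / ω := by
  obtain ⟨p, hp, hp0, hp1, hp2, hp3⟩ := exists_hasTaylorSeries_pAtInfinity hk
  obtain ⟨q, hq, hq0, hq1, hq2, hq3⟩ := exists_hasTaylorSeries_negQAtInfinity hk ω ξ
  refine ⟨_, (hq.sub ((HasTaylorSeries.id.mul hp).deriv.const_mul _)).add
    ((hp.pow 2).const_mul _), ?_⟩
  obtain ⟨hpp0, hpp1, hpp2, hpp3⟩ : coeff 0 (p ^ 2) = 4 ∧ coeff 1 (p ^ 2) = 0 ∧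
      coeff 2 (p ^ 2) = 4 * (2 * (k : ℂ) ^ 2 - 1) ∧ coeff 3 (p ^ 2) = 0 := by
    simp only [pow_two p, coeff_mul, Finset.Nat.sum_antidiagonal_eq_sum_range_succ_mk,
      Finset.sum_range_succ, Finset.sum_range_zero, Nat.reduceSub, hp0, hp1, hp2, hp3]
    norm_num
    ring
  simp only [map_add, map_sub, coeff_C_mul, coeff_derivative, coeff_succ_X_mul,
    hp0, hp1, hp2, hp3, hq0, hq1, hq2, hq3, hpp0, hpp1, hpp2, hpp3]
  norm_num
  ring

end ExpansionAtInfinity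

lemma eventually_eq_rAtInfinity_mul {k ω ξ : ℝ} (hω : ω ≠ 0) {W : ℂ → ℂ}
    (hode : ∀ᶠ ζ in 𝓝[≠] (0 : ℂ),
      deriv (deriv W) ζ + (2 / ζ) * deriv W ζ - (1 / ζ ^ 4) * rLt k ω ξ (1 / ζ) * W ζ = 0) :
    ∀ᶠ ζ in 𝓝[≠] (0 : ℂ),
      ζ * (ζ * deriv (deriv W) ζ) + 2 * (ζ * deriv W ζ) = rAtInfinity k ω ξ ζ * W ζ := by
  have hp := (analyticAt_pAtInfinity k).eventually_analyticAt
  filter_upwards [hode, hp.filter_mono nhdsWithin_le_nhds, self_mem_nhdsWithin] with ζ hζode hζp hζ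
  have hζ0 : ζ ≠ 0 := hζ
  rw [one_div ζ, rLt_inv hω hζ0 hζp.differentiableAt] at hζode
  field_simp at hζode
  linear_combination hζode

lemma coeff_of_normal_variational_equation {k ω ξ : ℝ} (hk : k ^ 2 ≤ 1) (hω : ω ≠ 0)
    {W : ℂ → ℂ} {w : ℂ⟦X⟧} (hw : HasTaylorSeries W w) (hw0 : coeff 0 w = 0) (hw1 : coeff 1 w = 1)
    (hode : ∀ᶠ ζ in 𝓝[≠] (0 : ℂ),
      deriv (deriv W) ζ + (2 / ζ) * deriv W ζ - (1 / ζ ^ 4) * rLt k ω ξ (1 / ζ) * W ζ = 0) :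
    coeff 2 w = 1 / (2 * (ω : ℂ)) ∧
    coeff 3 w = ((ω : ℂ) ^ 2 * (4 * (k : ℂ) ^ 2 - 1) + 2 * (2 - (ξ : ℂ))) / (20 * (ω : ℂ) ^ 2) ∧
    coeff 4 w = ((ω : ℂ) ^ 2 * (108 * (k : ℂ) ^ 2 - 47) + 2 * (9 - 7 * (ξ : ℂ)))
      / (360 * (ω : ℂ) ^ 3) := by
  have hω' : (ω : ℂ) ≠ 0 := ofReal_ne_zero.mpr hω
  obtain ⟨ρ, hρ, hρ0, hρ1, hρ2, hρ3⟩ := exists_hasTaylorSeries_rAtInfinity hk ω ξ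
  obtain ⟨h2, h3, h4⟩ := coeff_of_frobenius_recurrence
    (frobenius_recurrence hw hρ (eventually_eq_rAtInfinity_mul hω hode)) hw0 hw1 hρ0
  have hw2 : coeff 2 w = 1 / (2 * (ω : ℂ)) := by
    rw [hρ1] at h2
    linear_combination h2 / 4
  have hw3 : coeff 3 w = ((ω : ℂ) ^ 2 * (4 * (k : ℂ) ^ 2 - 1) + 2 * (2 - (ξ : ℂ)))
      / (20 * (ω : ℂ) ^ 2) := by
    rw [hρ1, hρ2, hw2] at h3
    field_simp at h3 ⊢
    linear_combination h3
  refine ⟨hw2, hw3, ?_⟩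
  rw [hρ1, hρ2, hρ3, hw2, hw3] at h4
  field_simp at h4 ⊢
  linear_combination h4 / 4

theorem taylor_coefficients_at_infinity_general {k ω ξ : ℝ} (hk : k ^ 2 ≤ 1) (hω : ω ≠ 0)
    {W : ℂ → ℂ} (hW : AnalyticAt ℂ W 0) (hW0 : W 0 = 0) (hW1 : deriv W 0 = 1)
    (hode : ∀ᶠ ζ in 𝓝[≠] (0 : ℂ),
      deriv (deriv W) ζ + (2 / ζ) * deriv W ζ - (1 / ζ ^ 4) * rLt k ω ξ (1 / ζ) * W ζ = 0) :
    ∀ f₁ f₂ f₃ : ℂ,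
      f₁ = iteratedDeriv 2 W 0 / 2 →
      f₂ = iteratedDeriv 3 W 0 / 6 →
      f₃ = iteratedDeriv 4 W 0 / 24 →
      f₁ = 1 / (2 * (ω : ℂ)) ∧
      f₂ = ((ω : ℂ) ^ 2 * (4 * (k : ℂ) ^ 2 - 1) + 2 * (2 - (ξ : ℂ)))
            / (20 * (ω : ℂ) ^ 2) ∧
      f₃ = ((ω : ℂ) ^ 2 * (108 * (k : ℂ) ^ 2 - 47) + 2 * (9 - 7 * (ξ : ℂ)))
            / (360 * (ω : ℂ) ^ 3) ∧
      (-2) * (2 * f₁ ^ 3 - 3 * f₁ * f₂ + f₃)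
        = ((ω : ℂ) ^ 2 - 2 * (ξ : ℂ)) / (9 * (ω : ℂ) ^ 3) ∧
      ((-2) * (2 * f₁ ^ 3 - 3 * f₁ * f₂ + f₃) ≠ 0 ↔ (ω : ℂ) ^ 2 ≠ 2 * (ξ : ℂ)) := by
  intro f₁ f₂ f₃ hf₁ hf₂ hf₃
  obtain ⟨w, hw⟩ := exists_hasTaylorSeries hW
  have hw1 : coeff 1 w = 1 := by simpa [hW1] using (hw.2 1).symm
  obtain ⟨hw2, hw3, hw4⟩ :=
    coeff_of_normal_variational_equation hk hω hw (hw.coeff_zero.trans hW0) hw1 hode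
  have e₁ : f₁ = coeff 2 w := by rw [hf₁, hw.2]; simp [Nat.factorial]
  have e₂ : f₂ = coeff 3 w := by rw [hf₂, hw.2]; simp [Nat.factorial]
  have e₃ : f₃ = coeff 4 w := by rw [hf₃, hw.2]; simp [Nat.factorial]
  have hω' : (ω : ℂ) ≠ 0 := ofReal_ne_zero.mpr hω
  have hg₃ : (-2) * (2 * f₁ ^ 3 - 3 * f₁ * f₂ + f₃)
      = ((ω : ℂ) ^ 2 - 2 * (ξ : ℂ)) / (9 * (ω : ℂ) ^ 3) := by
    rw [e₁, e₂, e₃, hw2, hw3, hw4]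
    field_simp
    ring
  refine ⟨e₁.trans hw2, e₂.trans hw3, e₃.trans hw4, hg₃, ?_⟩
  rw [hg₃]
  simp [hω', sub_eq_zero]

/-- if `W` is holomorphic near `0`, `W(0) = 0`, `W'(0) = 1`, and `W`
satisfies `W'' + (2/ζ)W' − ζ⁻⁴ r(1/ζ) W = 0` (case `C < 1`) on a punctured
neighbourhood of `0`, then its Taylor coefficients `f₁, f₂, f₃` (from
`W(ζ) = ζ(1 + f₁ζ + f₂ζ² + f₃ζ³ + O(ζ⁴))`) are as stated, and
`g₃ = −2(2f₁³ − 3f₁f₂ + f₃) = (ω² − 2ξ)/(9ω³)`; in particular `g₃ ≠ 0 ↔ ω² ≠ 2ξ`. -/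
theorem taylor_coefficients_at_infinity (k ω ξ : ℝ)
    (hk0 : 0 < k) (hk1 : k < 1) (hω : 0 < ω)
    (W : ℂ → ℂ) (U : Set ℂ) (hU : U ∈ nhds (0 : ℂ))
    (hW : AnalyticOnNhd ℂ W U) (hW0 : W 0 = 0) (hW1 : deriv W 0 = 1)
    (hode : ∀ ζ ∈ U, ζ ≠ 0 →
      deriv (deriv W) ζ + (2 / ζ) * deriv W ζ
        - (1 / ζ ^ 4) * rLt k ω ξ (1 / ζ) * W ζ = 0) :
    ∀ f₁ f₂ f₃ : ℂ,
      f₁ = iteratedDeriv 2 W 0 / 2 →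
      f₂ = iteratedDeriv 3 W 0 / 6 →
      f₃ = iteratedDeriv 4 W 0 / 24 →
      f₁ = 1 / (2 * (ω : ℂ)) ∧
      f₂ = ((ω : ℂ) ^ 2 * (4 * (k : ℂ) ^ 2 - 1) + 2 * (2 - (ξ : ℂ)))
            / (20 * (ω : ℂ) ^ 2) ∧
      f₃ = ((ω : ℂ) ^ 2 * (108 * (k : ℂ) ^ 2 - 47) + 2 * (9 - 7 * (ξ : ℂ)))
            / (360 * (ω : ℂ) ^ 3) ∧
      (-2) * (2 * f₁ ^ 3 - 3 * f₁ * f₂ + f₃)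
        = ((ω : ℂ) ^ 2 - 2 * (ξ : ℂ)) / (9 * (ω : ℂ) ^ 3) ∧
      ((-2) * (2 * f₁ ^ 3 - 3 * f₁ * f₂ + f₃) ≠ 0 ↔ (ω : ℂ) ^ 2 ≠ 2 * (ξ : ℂ)) :=
  taylor_coefficients_at_infinity_general (by nlinarith) hω.ne' (hW 0 (mem_of_mem_nhds hU)) hW0 hW1
    (by filter_upwards [nhdsWithin_le_nhds hU, self_mem_nhdsWithin] using hode)
end
end

section
/- Let r be the case C < 1 normal-form coefficient and assume ξ = ω²/2. Set θ(z) = (1/2)Σᵢ₌₁⁴ 1/(z−zᵢ) with z₁ = k, z₂ = −k, z₃ = ik', z₄ = −ik', and let P(z) = z² − (2/ω)z + ((1−2k²)ω² + 4)/(2ω²). Then P satisfies the third-order equation of the second case of the Kovacic algorithm: P''' + 3θP'' + (3θ² + 3θ' − 4r)P' + (θ'' + 3θθ' + θ³ − 4rθ − 2r')P = 0 for all z ∈ ℂ ∖ {z₁,z₂,z₃,z₄}. -/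
noncomputable section

open Complex

/-- The poles `z₁ = k`, `z₂ = −k`, `z₃ = ik'`, `z₄ = −ik'`. -/
def poles (k : ℝ) : Fin 4 → ℂ :=
  ![(k : ℂ), -(k : ℂ), I * (kp k : ℂ), -(I * (kp k : ℂ))]

/-- `θ(z) = (1/2) Σᵢ 1/(z − zᵢ)`. -/
def theta (k : ℝ) (z : ℂ) : ℂ := (1 / 2) * ∑ i, 1 / (z - poles k i)

/-- The polynomial `P(z) = z² − (2/ω)z + ((1−2k²)ω² + 4)/(2ω²)`. -/
def Ppoly (k ω : ℝ) (z : ℂ) : ℂ :=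
  z ^ 2 - (2 / (ω : ℂ)) * z + ((1 - 2 * (k : ℂ) ^ 2) * (ω : ℂ) ^ 2 + 4)
    / (2 * (ω : ℂ) ^ 2)

/-!
Off the poles, `θ` and `p` are both half the logarithmic derivative of the quartic
`f(z) = (k² − z²)(z² + k'²)`. Since `r = −q + p'/2 + p²/4` is the normal form of
`y'' + p y' + q y = 0` under `W = f^{1/4} y`, and the case-two equation says that `f^{1/2} P` solves
the symmetric square of `W'' = rW`, it amounts to `P` solving the symmetric square of
`y'' + p y' + q y = 0`. As `f q = M` is a polynomial, multiplying by `f` clears all denominators and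
leaves the polynomial identity
`f P''' + (3/2) f' P'' + (f''/2 + 4M) P' + 2M' P = 0`.
-/

section Operators

variable {𝕜 : Type*} [NontriviallyNormedField 𝕜]

/-- The left-hand side of the third-order equation that the second case of the Kovacic algorithm
imposes on `P`, for the equation `W'' = rW` and the function `θ` built from the pole data. -/
def caseTwoOperator (θ r P : 𝕜 → 𝕜) (z : 𝕜) : 𝕜 :=
  deriv (deriv (deriv P)) z
    + 3 * θ z * deriv (deriv P) z
    + (3 * θ z ^ 2 + 3 * deriv θ z - 4 * r z) * deriv P z
    + (deriv (deriv θ) z + 3 * θ z * deriv θ z + θ z ^ 3 - 4 * r z * θ z - 2 * deriv r z) * P z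

/-- The coefficient `r` of the normal form `W'' = rW` of `y'' + p y' + q y = 0`. -/
def normalForm (p q : 𝕜 → 𝕜) (z : 𝕜) : 𝕜 :=
  -q z + deriv p z / 2 + p z ^ 2 / 4

/-- The symmetric square of `y'' + p y' + q y = 0`: the third-order linear differential operator
that annihilates the products of two solutions. -/
def symSquareOperator (p q P : 𝕜 → 𝕜) (z : 𝕜) : 𝕜 :=
  deriv (deriv (deriv P)) z
    + 3 * p z * deriv (deriv P) z
    + (2 * p z ^ 2 + deriv p z + 4 * q z) * deriv P z
    + (4 * p z * q z + 2 * deriv q z) * P z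

/-- Half the logarithmic derivative, i.e. the logarithmic derivative of `√f`. -/
def halfLogDeriv (f : 𝕜 → 𝕜) (z : 𝕜) : 𝕜 := logDeriv f z / 2

/-- The symmetric square of `y'' + (f'/(2f)) y' + (M/f) y = 0` multiplied by `f`, written without
denominators. -/
def clearedSymSquare (f M P : 𝕜 → 𝕜) (z : 𝕜) : 𝕜 :=
  f z * deriv (deriv (deriv P)) z
    + 3 / 2 * deriv f z * deriv (deriv P) z
    + (deriv (deriv f) z / 2 + 4 * M z) * deriv P z
    + 2 * deriv M z * P z

lemma deriv_quadratic (a b c : 𝕜) :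
    deriv (fun z ↦ a * z ^ 2 + b * z + c) = fun z ↦ 2 * a * z + b := by
  funext z
  have h := (((hasDerivAt_pow 2 z).const_mul a).add ((hasDerivAt_id z).const_mul b)).add_const c
  refine h.deriv.trans ?_
  push_cast
  ring

lemma caseTwoOperator_congr {θ₁ θ₂ : 𝕜 → 𝕜} {z : 𝕜} (h : θ₁ =ᶠ[nhds z] θ₂) (r P : 𝕜 → 𝕜) :
    caseTwoOperator θ₁ r P z = caseTwoOperator θ₂ r P z := by
  simp only [caseTwoOperator, h.eq_of_nhds, h.deriv_eq, h.deriv.deriv_eq]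

lemma logDeriv_prod_sub {ι : Type*} (s : Finset ι) (a : ι → 𝕜) {z : 𝕜}
    (hz : ∀ i ∈ s, z ≠ a i) :
    logDeriv (fun w ↦ ∏ i ∈ s, (w - a i)) z = ∑ i ∈ s, 1 / (z - a i) := by
  rw [logDeriv_prod (fun i hi ↦ sub_ne_zero.2 (hz i hi)) (fun i _ ↦ by fun_prop)]
  simp only [logDeriv_apply, deriv_sub_const_fun, deriv_id'']

lemma analyticAt_halfLogDeriv [CompleteSpace 𝕜] {f : 𝕜 → 𝕜} {z : 𝕜} (hf : AnalyticAt 𝕜 f z)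
    (hfz : f z ≠ 0) : AnalyticAt 𝕜 (halfLogDeriv f) z :=
  (hf.deriv.div hf hfz).div_const

lemma deriv_halfLogDeriv {f : 𝕜 → 𝕜} {z : 𝕜} (hf : DifferentiableAt 𝕜 f z)
    (hf' : DifferentiableAt 𝕜 (deriv f) z) (hfz : f z ≠ 0) :
    deriv (halfLogDeriv f) z = (deriv (deriv f) z * f z - deriv f z ^ 2) / f z ^ 2 / 2 := by
  have h := (hf'.hasDerivAt.div hf.hasDerivAt hfz).div_const 2
  rw [sq (deriv f z)]
  exact h.deriv

variable [CharZero 𝕜]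

lemma deriv_normalForm {p q : 𝕜 → 𝕜} {z : 𝕜} (hp : DifferentiableAt 𝕜 p z)
    (hp' : DifferentiableAt 𝕜 (deriv p) z) (hq : DifferentiableAt 𝕜 q z) :
    deriv (normalForm p q) z = -deriv q z + deriv (deriv p) z / 2 + p z * deriv p z / 2 := by
  have h := (hq.hasDerivAt.neg.add (hp'.hasDerivAt.div_const 2)).add
    ((hp.hasDerivAt.pow 2).div_const 4)
  refine h.deriv.trans ?_
  ring

lemma caseTwoOperator_normalForm {p q : 𝕜 → 𝕜} {z : 𝕜} (hp : DifferentiableAt 𝕜 p z)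
    (hp' : DifferentiableAt 𝕜 (deriv p) z) (hq : DifferentiableAt 𝕜 q z) (P : 𝕜 → 𝕜) :
    caseTwoOperator p (normalForm p q) P z = symSquareOperator p q P z := by
  rw [caseTwoOperator, deriv_normalForm hp hp' hq, normalForm, symSquareOperator]
  ring

lemma mul_symSquareOperator_halfLogDeriv {f M : 𝕜 → 𝕜} {z : 𝕜} (hf : DifferentiableAt 𝕜 f z)
    (hf' : DifferentiableAt 𝕜 (deriv f) z) (hM : DifferentiableAt 𝕜 M z) (hfz : f z ≠ 0)
    (P : 𝕜 → 𝕜) :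
    f z * symSquareOperator (halfLogDeriv f) (M / f) P z = clearedSymSquare f M P z := by
  rw [symSquareOperator, deriv_halfLogDeriv hf hf' hfz, deriv_div hM hf hfz, halfLogDeriv,
    logDeriv_apply, Pi.div_apply, clearedSymSquare]
  field_simp
  ring

lemma mul_caseTwoOperator_halfLogDeriv [CompleteSpace 𝕜] {f M : 𝕜 → 𝕜} {z : 𝕜}
    (hf : AnalyticAt 𝕜 f z) (hM : DifferentiableAt 𝕜 M z) (hfz : f z ≠ 0) (P : 𝕜 → 𝕜) :
    f z * caseTwoOperator (halfLogDeriv f) (normalForm (halfLogDeriv f) (M / f)) P z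
      = clearedSymSquare f M P z := by
  have hp := analyticAt_halfLogDeriv hf hfz
  rw [caseTwoOperator_normalForm hp.differentiableAt hp.deriv.differentiableAt
      (hM.div hf.differentiableAt hfz),
    mul_symSquareOperator_halfLogDeriv hf.differentiableAt hf.deriv.differentiableAt hM hfz]

end Operators

/-- The quartic `f(z) = (k² − z²)(z² + k'²)`, the common denominator of `p` and `q`. -/
def poleQuartic (k : ℝ) (z : ℂ) : ℂ := ((k : ℂ) ^ 2 - z ^ 2) * (z ^ 2 + (kp k : ℂ) ^ 2)

/-- The quadratic polynomial `M = f q`, where `f` is `poleQuartic k` and `q` is `qLt k ω ξ`. -/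
def qNumerator (k ω ξ : ℝ) (z : ℂ) : ℂ :=
  (-(ξ : ℂ) + (1 + (ω : ℂ) * z) ^ 2 + (ω : ℂ) ^ 2 * (z ^ 2 + (kp k : ℂ) ^ 2)) / (ω : ℂ) ^ 2

lemma ofReal_kp_sq {k : ℝ} (hk : k ^ 2 ≤ 1) : (kp k : ℂ) ^ 2 = 1 - (k : ℂ) ^ 2 := by
  exact_mod_cast Real.sq_sqrt (sub_nonneg.2 hk)

lemma qLt_eq_div (k ω ξ : ℝ) : qLt k ω ξ = qNumerator k ω ξ / poleQuartic k := by
  funext z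
  rw [qLt, Pi.div_apply, qNumerator, poleQuartic, div_div, mul_assoc]

lemma poleQuartic_eq_neg_prod (k : ℝ) (z : ℂ) : poleQuartic k z = -∏ i, (z - poles k i) := by
  simp only [poleQuartic, poles, Fin.prod_univ_four, Matrix.cons_val]
  linear_combination ((k : ℂ) ^ 2 - z ^ 2) * (kp k : ℂ) ^ 2 * I_sq

lemma poleQuartic_ne_zero {k : ℝ} {z : ℂ} (hz : ∀ i, z ≠ poles k i) : poleQuartic k z ≠ 0 := by
  rw [poleQuartic_eq_neg_prod]
  exact neg_ne_zero.2 (Finset.prod_ne_zero_iff.2 fun i _ ↦ sub_ne_zero.2 (hz i))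

lemma theta_eq_halfLogDeriv {k : ℝ} {z : ℂ} (hz : ∀ i, z ≠ poles k i) :
    theta k z = halfLogDeriv (poleQuartic k) z := by
  have hf : poleQuartic k = fun w ↦ -1 * ∏ i, (w - poles k i) := by
    funext w
    rw [poleQuartic_eq_neg_prod, neg_one_mul]
  rw [halfLogDeriv, hf, logDeriv_const_mul _ _ (neg_ne_zero.2 one_ne_zero),
    logDeriv_prod_sub _ _ fun i _ ↦ hz i, theta]
  ring

lemma theta_eventuallyEq_halfLogDeriv {k : ℝ} {z : ℂ} (hz : ∀ i, z ≠ poles k i) :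
    theta k =ᶠ[nhds z] halfLogDeriv (poleQuartic k) := by
  have hnear : ∀ᶠ w in nhds z, ∀ i, w ≠ poles k i :=
    Filter.eventually_all.2 fun i ↦ isOpen_ne.mem_nhds (hz i)
  exact hnear.mono fun _ ↦ theta_eq_halfLogDeriv

lemma deriv_poleQuartic {k : ℝ} (hk : k ^ 2 ≤ 1) :
    deriv (poleQuartic k) = fun z ↦ -4 * z ^ 3 + 2 * (2 * (k : ℂ) ^ 2 - 1) * z := by
  funext z
  have h : HasDerivAt (poleQuartic k) _ z :=
    ((hasDerivAt_pow 2 z).const_sub ((k : ℂ) ^ 2)).mul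
      ((hasDerivAt_pow 2 z).add_const ((kp k : ℂ) ^ 2))
  rw [h.deriv, ofReal_kp_sq hk]
  push_cast
  ring

lemma deriv_deriv_poleQuartic {k : ℝ} (hk : k ^ 2 ≤ 1) :
    deriv (deriv (poleQuartic k)) = fun z ↦ -12 * z ^ 2 + 2 * (2 * (k : ℂ) ^ 2 - 1) := by
  funext z
  rw [deriv_poleQuartic hk]
  have h := ((hasDerivAt_pow 3 z).const_mul (-4)).add
    ((hasDerivAt_id z).const_mul (2 * (2 * (k : ℂ) ^ 2 - 1)))
  refine h.deriv.trans ?_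
  push_cast
  ring

lemma pcoef_eq_halfLogDeriv {k : ℝ} (hk : k ^ 2 ≤ 1) :
    pcoef k = halfLogDeriv (poleQuartic k) := by
  funext z
  rw [halfLogDeriv, logDeriv_apply, deriv_poleQuartic hk, pcoef, poleQuartic, div_right_comm]
  ring

lemma rLt_eq_normalForm {k : ℝ} (hk : k ^ 2 ≤ 1) (ω ξ : ℝ) :
    rLt k ω ξ = normalForm (halfLogDeriv (poleQuartic k)) (qNumerator k ω ξ / poleQuartic k) := by
  rw [← pcoef_eq_halfLogDeriv hk, ← qLt_eq_div]
  rfl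

lemma qNumerator_eq {k ω : ℝ} (hk : k ^ 2 ≤ 1) (hω : ω ≠ 0) (ξ : ℝ) :
    qNumerator k ω ξ
      = fun z ↦ 2 * z ^ 2 + 2 / (ω : ℂ) * z
        + ((1 - (ξ : ℂ)) / (ω : ℂ) ^ 2 + 1 - (k : ℂ) ^ 2) := by
  funext z
  have hω' : (ω : ℂ) ≠ 0 := ofReal_ne_zero.2 hω
  rw [qNumerator, ofReal_kp_sq hk]
  field_simp
  ring

lemma deriv_qNumerator {k ω : ℝ} (hk : k ^ 2 ≤ 1) (hω : ω ≠ 0) (ξ : ℝ) :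
    deriv (qNumerator k ω ξ) = fun z ↦ 4 * z + 2 / (ω : ℂ) := by
  rw [qNumerator_eq hk hω, deriv_quadratic]
  norm_num

lemma deriv_Ppoly (k ω : ℝ) : deriv (Ppoly k ω) = fun z ↦ 2 * z - 2 / (ω : ℂ) := by
  have h : Ppoly k ω = fun z ↦ 1 * z ^ 2 + -(2 / (ω : ℂ)) * z
      + ((1 - 2 * (k : ℂ) ^ 2) * (ω : ℂ) ^ 2 + 4) / (2 * (ω : ℂ) ^ 2) := by
    funext z
    rw [Ppoly]
    ring
  rw [h, deriv_quadratic]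
  funext z
  ring

lemma deriv_deriv_Ppoly (k ω : ℝ) : deriv (deriv (Ppoly k ω)) = fun _ ↦ 2 := by
  rw [deriv_Ppoly]
  funext z
  simp

lemma clearedSymSquare_Ppoly {k ω : ℝ} (hk : k ^ 2 ≤ 1) (hω : ω ≠ 0) (z : ℂ) :
    clearedSymSquare (poleQuartic k) (qNumerator k ω (ω ^ 2 / 2)) (Ppoly k ω) z = 0 := by
  have hω' : (ω : ℂ) ≠ 0 := ofReal_ne_zero.2 hω
  rw [clearedSymSquare, deriv_deriv_poleQuartic hk, deriv_poleQuartic hk, deriv_qNumerator hk hω,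
    qNumerator_eq hk hω, deriv_deriv_Ppoly, deriv_Ppoly, deriv_const, Ppoly]
  push_cast
  field_simp
  ring

/-- case `C < 1`, `ξ = ω²/2`: the polynomial `P` satisfies the
third-order equation of the second case of the Kovacic algorithm
`P''' + 3θP'' + (3θ² + 3θ' − 4r)P' + (θ'' + 3θθ' + θ³ − 4rθ − 2r')P = 0`. -/
theorem kovacic_case_two_Clt (k ω ξ : ℝ)
    (hk0 : 0 < k) (hk1 : k < 1) (hω : 0 < ω) (hξ : ξ = ω ^ 2 / 2) :
    ∀ z : ℂ, (∀ i, z ≠ poles k i) →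
      deriv (deriv (deriv (Ppoly k ω))) z
        + 3 * theta k z * deriv (deriv (Ppoly k ω)) z
        + (3 * theta k z ^ 2 + 3 * deriv (theta k) z - 4 * rLt k ω ξ z)
          * deriv (Ppoly k ω) z
        + (deriv (deriv (theta k)) z + 3 * theta k z * deriv (theta k) z
            + theta k z ^ 3 - 4 * rLt k ω ξ z * theta k z
            - 2 * deriv (rLt k ω ξ) z) * Ppoly k ω z
        = 0 := by
  intro z hz
  have hk : k ^ 2 ≤ 1 := pow_le_one₀ hk0.le hk1.le
  have hfz : poleQuartic k z ≠ 0 := poleQuartic_ne_zero hz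
  have hf : AnalyticAt ℂ (poleQuartic k) z := by
    unfold poleQuartic
    fun_prop
  have hM : DifferentiableAt ℂ (qNumerator k ω ξ) z := by
    unfold qNumerator
    fun_prop
  change caseTwoOperator (theta k) (rLt k ω ξ) (Ppoly k ω) z = 0
  rw [caseTwoOperator_congr (theta_eventuallyEq_halfLogDeriv hz), rLt_eq_normalForm hk]
  refine (mul_eq_zero_iff_left hfz).1 ?_
  rw [mul_caseTwoOperator_halfLogDeriv hf hM hfz, hξ]
  exact clearedSymSquare_Ppoly hk hω.ne' z
end
end
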